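/- For every λ = (λ₊,λ₋) ∈ ℂ² and every 0 ≤ m ≤ p−1, the element D_m := d_{m0}(λ) ⊗ g_λ is a joint eigenvector of the complete set of commuting observables: R_κ(D_m) = q^m·D_m, R₊^p(D_m) = λ₊^p·D_m, R₋^p(D_m) = λ₋^p·D_m, and (R₋∘R₊)(D_m) = λ₊λ₋·D_m (the last operator representing the Casimir element p₊p₋ of U_q(e(1,1))). -/

import Mathlib

open scoped TensorProduct

noncomputable section

/-- `q = exp(2πi/p)`, a primitive `p`-th root of unity. -/
def q (p : ℕ) : ℂ := Complex.exp (2 * Real.pi * Complex.I / p)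

/-- `q^{1/2} = exp(iπ/p)`. -/
def qh (p : ℕ) : ℂ := Complex.exp (Real.pi * Complex.I / p)

/-- The balanced q-number `[k] = (q^k - q^{-k})/(q - q^{-1})`. -/
def qnum (p k : ℕ) : ℂ := (q p ^ k - (q p)⁻¹ ^ k) / (q p - (q p)⁻¹)

/-- The balanced q-factorial `[k]! = [1][2]⋯[k]`, with `[0]! = 1`. -/
def qfact (p k : ℕ) : ℂ := ∏ j ∈ Finset.range k, qnum p (j + 1)

/-- Generators `η₊, η₋, δ` of the coordinate algebra of `E(1,1|p)`. -/
inductive Gen : Type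
  | ep : Gen
  | em : Gen
  | d : Gen

open FreeAlgebra in
/-- The defining relations of `A(E(1,1|p))`: the two-sided ideal generated by
`η₋η₊ − q²η₊η₋`, `η₊δ − q²δη₊`, `η₋δ − q²δη₋`, `δ^p − 1`, `η₊^p`, `η₋^p`. -/
inductive ERel (p : ℕ) : FreeAlgebra ℂ Gen → FreeAlgebra ℂ Gen → Prop
  | commEta : ERel p (ι ℂ Gen.em * ι ℂ Gen.ep) ((q p ^ 2) • (ι ℂ Gen.ep * ι ℂ Gen.em))
  | commEpD : ERel p (ι ℂ Gen.ep * ι ℂ Gen.d) ((q p ^ 2) • (ι ℂ Gen.d * ι ℂ Gen.ep))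
  | commEmD : ERel p (ι ℂ Gen.em * ι ℂ Gen.d) ((q p ^ 2) • (ι ℂ Gen.d * ι ℂ Gen.em))
  | deltaPow : ERel p (ι ℂ Gen.d ^ p) 1
  | epPow : ERel p (ι ℂ Gen.ep ^ p) 0
  | emPow : ERel p (ι ℂ Gen.em ^ p) 0

/-- The coordinate algebra `A = A(E(1,1|p))` of the reduced quantum Poincaré group. -/
abbrev A (p : ℕ) : Type := RingQuot (ERel p)

/-- `η₊ ∈ A`. -/
def ηp (p : ℕ) : A p := RingQuot.mkAlgHom ℂ (ERel p) (FreeAlgebra.ι ℂ Gen.ep)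

/-- `η₋ ∈ A`. -/
def ηm (p : ℕ) : A p := RingQuot.mkAlgHom ℂ (ERel p) (FreeAlgebra.ι ℂ Gen.em)

/-- `δ ∈ A`. -/
def dl (p : ℕ) : A p := RingQuot.mkAlgHom ℂ (ERel p) (FreeAlgebra.ι ℂ Gen.d)

set_option synthInstance.maxHeartbeats 1000000
set_option maxHeartbeats 1000000

/-- The algebra `C^∞(ℝ², ℂ)` of smooth complex-valued functions on `ℝ²`. -/
def Cinf : Subalgebra ℂ ((ℝ × ℝ) → ℂ) where
  carrier := {f | ContDiff ℝ (⊤ : ℕ∞) f}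
  mul_mem' := fun {a b} (ha : ContDiff ℝ (⊤ : ℕ∞) a) (hb : ContDiff ℝ (⊤ : ℕ∞) b) =>
    ha.mul hb
  one_mem' := by
    change ContDiff ℝ (⊤ : ℕ∞) (fun _ => (1 : ℂ))
    exact contDiff_const
  add_mem' := fun {a b} (ha : ContDiff ℝ (⊤ : ℕ∞) a) (hb : ContDiff ℝ (⊤ : ℕ∞) b) =>
    ha.add hb
  zero_mem' := by
    change ContDiff ℝ (⊤ : ℕ∞) (fun _ => (0 : ℂ))
    exact contDiff_const
  algebraMap_mem' c := by
    change ContDiff ℝ (⊤ : ℕ∞) (fun _ => c)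
    exact contDiff_const

/-- `A_C = A ⊗ C^∞(ℝ², ℂ)`, the coordinate algebra of the quantum plane `E_q^{(1,1)}`
(without support restriction). -/
abbrev AC (p : ℕ) : Type := A p ⊗[ℂ] ↥Cinf

/-- The partial derivative `∂₊ = ∂/∂z₊` on `C^∞(ℝ², ℂ)`. -/
def dPlus (f : ↥Cinf) : ↥Cinf :=
  ⟨fun z => fderiv ℝ (f : (ℝ × ℝ) → ℂ) z (1, 0), by
    have hf : ContDiff ℝ (⊤ : ℕ∞) (f : (ℝ × ℝ) → ℂ) := f.2
    exact (hf.fderiv_right (m := (⊤ : ℕ∞)) (by simp)).clm_apply contDiff_const⟩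

/-- The partial derivative `∂₋ = ∂/∂z₋` on `C^∞(ℝ², ℂ)`. -/
def dMinus (f : ↥Cinf) : ↥Cinf :=
  ⟨fun z => fderiv ℝ (f : (ℝ × ℝ) → ℂ) z (0, 1), by
    have hf : ContDiff ℝ (⊤ : ℕ∞) (f : (ℝ × ℝ) → ℂ) := f.2
    exact (hf.fderiv_right (m := (⊤ : ℕ∞)) (by simp)).clm_apply contDiff_const⟩

/-- The smooth function `exp(i(a z₊ + b z₋))` on `ℝ²`. -/
def expAB (a b : ℂ) : ↥Cinf :=
  ⟨fun z => Complex.exp (Complex.I * (a * z.1 + b * z.2)), by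
    have h1 : ContDiff ℝ (⊤ : ℕ∞) (fun z : ℝ × ℝ => (z.1 : ℂ)) :=
      Complex.ofRealCLM.contDiff.comp contDiff_fst
    have h2 : ContDiff ℝ (⊤ : ℕ∞) (fun z : ℝ × ℝ => (z.2 : ℂ)) :=
      Complex.ofRealCLM.contDiff.comp contDiff_snd
    have h3 : ContDiff ℝ (⊤ : ℕ∞)
        (fun z : ℝ × ℝ => Complex.I * (a * (z.1 : ℂ) + b * (z.2 : ℂ))) :=
      contDiff_const.mul ((contDiff_const.mul h1).add (contDiff_const.mul h2))
    exact h3.cexp⟩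
/-- `ξ = q·η₊η₋ ∈ A`. -/
def xi (p : ℕ) : A p := q p • (ηp p * ηm p)

/-- The cut-off Hahn–Exton q-Bessel function
`𝒥_m(λ²ξ) = Σ_{k=0}^{p−1−m} (−1)^k q^{mk} (λ²)^k ([k]![k+m]!)⁻¹ ξ^k`. -/
def Jq (p : ℕ) (l2 : ℂ) (m : ℕ) : A p :=
  ∑ k ∈ Finset.range (p - m),
    ((-1 : ℂ) ^ k * q p ^ (m * k) * l2 ^ k / (qfact p k * qfact p (k + m))) • xi p ^ k

/-- The matrix element `d_{m0}(λ) = 𝒥_{p−m}(λ²ξ)(−iq^{1/2}λ₋η₋)^{p−m}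
+ (−iq^{−1/2}λ₊η₊)^m 𝒥_m(λ²ξ)`. -/
def dm0 (p : ℕ) (lp lm : ℂ) (m : ℕ) : A p :=
  Jq p (lp * lm) (p - m) * ((-Complex.I * qh p * lm) • ηm p) ^ (p - m) +
    ((-Complex.I * (qh p)⁻¹ * lp) • ηp p) ^ m * Jq p (lp * lm) m

/-!
Consider the Weyl-ordered products of the divided powers `(α₊η₊)^i/[i]!` and `(α₋η₋)^j/[j]!`, where
`α± = -iq^{∓1/2}λ±`, times the exponential `g_λ`. The twisted derivation `R₊` lowers `i` by one, up
to the factor `λ₊`. At `i = 0` it differentiates `g_λ` instead, and since `∂₊g_λ = -iλ₊^p g_λ` is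
`α₊^p g_λ` up to the sign in the definition of `R₊`, the result is `λ₊` times the product with
`i = p - 1`. So `R₊` shifts `i` cyclically modulo `p`; Weyl ordering makes the situation symmetric
in `±`, so `R₋` shifts `j` likewise. Finally `d_{m0} ⊗ g_λ` is the sum of these products over the
cyclic diagonal `i - j ≡ m (mod p)`, on which `R_κ` is the scalar `q^m`, while `R₊^p` and `R₋^p`
multiply each term by `λ±^p` and `R₋R₊` permutes the terms up to the factor `λ₊λ₋`.
-/

section QNumber

variable {K : Type*} [Field K] {u : K} {p k : ℕ}

/-- The balanced `u`-number `[n] = (u^n - u^{-n})/(u - u^{-1})` over an arbitrary field, so that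
`qnum p = qNumber (q p)`. It is the junk value `0` when `u = ±1`. -/
def qNumber (u : K) (n : ℕ) : K := (u ^ n - u⁻¹ ^ n) / (u - u⁻¹)

/-- The balanced `u`-factorial `[n]! = [1][2]⋯[n]`, so that `qfact p = qFactorial (q p)`. -/
def qFactorial (u : K) (n : ℕ) : K := ∏ j ∈ Finset.range n, qNumber u (j + 1)

theorem qFactorial_q (p n : ℕ) : qFactorial (q p) n = qfact p n := rfl

theorem qNumber_inv (u : K) (n : ℕ) : qNumber u⁻¹ n = qNumber u n := by
  rw [qNumber, qNumber, inv_inv, ← neg_sub, ← neg_sub u, neg_div_neg_eq]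

theorem qFactorial_inv (u : K) (n : ℕ) : qFactorial u⁻¹ n = qFactorial u n := by
  simp only [qFactorial, qNumber_inv]

@[simp]
theorem qFactorial_zero (u : K) : qFactorial u 0 = 1 := Finset.prod_range_zero _

theorem qFactorial_succ (u : K) (n : ℕ) :
    qFactorial u (n + 1) = qFactorial u n * qNumber u (n + 1) :=
  Finset.prod_range_succ _ _

@[simp]
theorem qNumber_zero (u : K) : qNumber u 0 = 0 := by simp [qNumber]

theorem qNumber_succ (hu : u - u⁻¹ ≠ 0) (n : ℕ) :
    qNumber u (n + 1) = u ^ n + u⁻¹ * qNumber u n := by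
  rw [qNumber, qNumber, mul_div_assoc', ← sub_eq_iff_eq_add, ← sub_div, div_eq_iff hu]
  ring

theorem pow_sub_inv_pow_ne_zero (hu : IsPrimitiveRoot u p) (hp : Odd p)
    (hk : 0 < k) (hkp : k < p) : u ^ k - u⁻¹ ^ k ≠ 0 := by
  intro h
  have hsq : u ^ (2 * k) = 1 := by
    have hu0 : u ^ k ≠ 0 := pow_ne_zero k (hu.ne_zero (by lia))
    rw [two_mul, pow_add]
    nth_rw 2 [sub_eq_zero.mp h]
    rw [inv_pow, mul_inv_cancel₀ hu0]
  have hdvd : p ∣ k :=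
    (Nat.Coprime.dvd_mul_left (Nat.coprime_two_right.mpr hp)).mp (hu.dvd_of_pow_eq_one _ hsq)
  exact absurd (Nat.le_of_dvd hk hdvd) (by lia)

theorem qNumber_ne_zero (hu : IsPrimitiveRoot u p) (hp : Odd p) (hk : 0 < k) (hkp : k < p) :
    qNumber u k ≠ 0 :=
  div_ne_zero (pow_sub_inv_pow_ne_zero hu hp hk hkp)
    (by simpa using pow_sub_inv_pow_ne_zero hu hp one_pos (by lia))

end QNumber

section TwistedDerivation

variable {K B : Type*} [Field K] [Semiring B] [Algebra K B]

/-- A linear map satisfying the twisted Leibniz rule `P(XY) = P(X) σ(Y) + σ⁻¹(X) P(Y)`. -/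
def IsTwistedDerivation (σ : B ≃ₐ[K] B) (P : B →ₗ[K] B) : Prop :=
  ∀ X Y, P (X * Y) = P X * σ Y + σ.symm X * P Y

theorem symm_pow_of_smul {u : K} {a : B} {σ : B ≃ₐ[K] B} (hu : u ≠ 0) (ha : σ a = u • a) (n : ℕ) :
    σ.symm (a ^ n) = u⁻¹ ^ n • a ^ n := by
  rw [AlgEquiv.symm_apply_eq, map_smul, map_pow, ha, smul_pow, smul_smul, ← mul_pow,
    inv_mul_cancel₀ hu, one_pow, one_smul]

namespace IsTwistedDerivation

variable {u s : K} {a b : B} {σ : B ≃ₐ[K] B} {P : B →ₗ[K] B}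

theorem map_one (h : IsTwistedDerivation σ P) : P 1 = 0 := by
  have hadd : P 1 = P 1 + P 1 := by simpa using h 1 1
  calc P 1 = (P 1 + P 1) + (-1 : K) • P 1 := by module
    _ = P 1 + (-1 : K) • P 1 := by rw [← hadd]
    _ = 0 := by module

theorem map_pow_of_eq_zero (h : IsTwistedDerivation σ P) (hb : P b = 0) (n : ℕ) :
    P (b ^ n) = 0 := by
  induction n with
  | zero => rw [pow_zero, h.map_one]
  | succ n ih => rw [pow_succ, h, ih, hb, zero_mul, mul_zero, add_zero]

theorem map_pow_succ (h : IsTwistedDerivation σ P) (hu : u - u⁻¹ ≠ 0) (hσ : σ a = u • a)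
    (ha : P a = s • 1) (n : ℕ) : P (a ^ (n + 1)) = (s * qNumber u (n + 1)) • a ^ n := by
  have hu0 : u ≠ 0 := by
    rintro rfl
    simp at hu
  induction n with
  | zero => simp [ha, qNumber_succ hu]
  | succ n ih =>
    have hσ' : σ.symm a = u⁻¹ • a := by simpa using symm_pow_of_smul hu0 hσ 1
    rw [pow_succ', h, ih, ha, hσ', map_pow, hσ, smul_pow, smul_mul_smul_comm, one_mul,
      smul_mul_smul_comm, ← pow_succ', ← add_smul, qNumber_succ hu (n + 1)]
    congr 1
    ring

end IsTwistedDerivation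

end TwistedDerivation

section QMonomial

variable {K B C : Type*} [Field K] [Semiring B] [Algebra K B] [Semiring C] [Algebra K C]
  {u : K} {a b : B}

theorem pow_mul_pow_of_qcomm (hba : b * a = u ^ 2 • (a * b)) (i j : ℕ) :
    b ^ j * a ^ i = u ^ (2 * (i * j)) • (a ^ i * b ^ j) := by
  have hpow (j : ℕ) : b ^ j * a = u ^ (2 * j) • (a * b ^ j) := by
    induction j with
    | zero => simp
    | succ j ih =>
      rw [pow_succ', mul_assoc, ih, mul_smul_comm, ← mul_assoc, hba, smul_mul_assoc, smul_smul,
        mul_assoc, ← pow_add, mul_add_one]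
  induction i with
  | zero => simp
  | succ i ih =>
    rw [pow_succ, ← mul_assoc, ih, smul_mul_assoc, mul_assoc, hpow, mul_smul_comm, smul_smul,
      ← mul_assoc (a ^ i), ← pow_succ, ← pow_add, ← mul_add, ← add_one_mul]

theorem qcomm_symm (hba : b * a = u ^ 2 • (a * b)) (hu : u ≠ 0) : a * b = u⁻¹ ^ 2 • (b * a) := by
  rw [hba, smul_smul, ← mul_pow, inv_mul_cancel₀ hu, one_pow, one_smul]

theorem smul_mul_pow_of_qcomm (hba : b * a = u ^ 2 • (a * b)) (k : ℕ) :
    (u • (a * b)) ^ k = u ^ (k * k) • (a ^ k * b ^ k) := by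
  induction k with
  | zero => simp
  | succ k ih =>
    have hswap : b * a ^ k = u ^ (2 * k) • (a ^ k * b) := by
      simpa using pow_mul_pow_of_qcomm hba k 1
    rw [pow_succ', ih, smul_mul_smul_comm, mul_assoc, ← mul_assoc b, hswap, smul_mul_assoc,
      mul_smul_comm, smul_smul, pow_succ' a, pow_succ' b]
    simp only [mul_assoc]
    congr 1
    ring

/-- The Weyl-ordered product of the divided powers `(αa)^i/[i]!` and `(βb)^j/[j]!`; the factor
`u^{ij}` makes it symmetric under `(u, α, a, i) ↔ (u⁻¹, β, b, j)` when `ba = u²ab`. -/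
def qMonomial (u α β : K) (a b : B) (i j : ℕ) : B :=
  (u ^ (i * j) * α ^ i * β ^ j / (qFactorial u i * qFactorial u j)) • (a ^ i * b ^ j)

theorem qMonomial_swap (hba : b * a = u ^ 2 • (a * b)) (hu : u ≠ 0) (α β : K) (i j : ℕ) :
    qMonomial u⁻¹ β α b a j i = qMonomial u α β a b i j := by
  rw [qMonomial, qMonomial, pow_mul_pow_of_qcomm hba, smul_smul, qFactorial_inv, qFactorial_inv,
    inv_pow, mul_comm j i, two_mul, pow_add]
  congr 1
  field_simp

theorem map_qMonomial (f : B →ₐ[K] C) (u α β : K) (a b : B) (i j : ℕ) :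
    f (qMonomial u α β a b i j) = qMonomial u α β (f a) (f b) i j := by
  simp only [qMonomial, map_smul, map_mul, map_pow]

end QMonomial

section CyclicShift

variable {K E : Type*} [CommSemiring K] [AddCommMonoid E] [Module K E] {p : ℕ} {x y t : K}

theorem pow_apply_of_shift {P : E →ₗ[K] E} {v : ZMod p → E} (hP : ∀ i, P (v i) = x • v (i - 1))
    (n : ℕ) (i : ZMod p) : (P ^ n) (v i) = x ^ n • v (i - n) := by
  induction n with
  | zero => simp
  | succ n ih =>
    rw [pow_succ', Module.End.mul_apply, ih, map_smul, hP, smul_smul, ← pow_succ, sub_sub,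
      Nat.cast_succ]

theorem pow_period_apply_of_shift {P : E →ₗ[K] E} {v : ZMod p → E}
    (hP : ∀ i, P (v i) = x • v (i - 1)) (i : ZMod p) : (P ^ p) (v i) = x ^ p • v i := by
  simpa using pow_apply_of_shift hP p i

variable [NeZero p] {v : ZMod p → ZMod p → E} {m : ZMod p}

/-- The sum `Σ_j v_{m+j,j}` of a doubly periodic family over a cyclic diagonal. -/
def diagonalSum (v : ZMod p → ZMod p → E) (m : ZMod p) : E := ∑ j, v (m + j) j

theorem map_diagonalSum_of_eigen {L : E →ₗ[K] E}
    (hL : ∀ j, L (v (m + j) j) = t • v (m + j) j) :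
    L (diagonalSum v m) = t • diagonalSum v m := by
  simp only [diagonalSum, map_sum, hL, Finset.smul_sum]

theorem map_map_diagonalSum_of_shift {P M : E →ₗ[K] E}
    (hP : ∀ i j, P (v i j) = x • v (i - 1) j) (hM : ∀ i j, M (v i j) = y • v i (j - 1)) :
    M (P (diagonalSum v m)) = (x * y) • diagonalSum v m := by
  simp only [diagonalSum, map_sum, hP, hM, map_smul, smul_smul, ← Finset.smul_sum, add_sub_assoc]
  exact congrArg _ ((Equiv.subRight (1 : ZMod p)).sum_comp fun j => v (m + j) j)

theorem diagonalSum_val (w : ℕ → ℕ → E) {m : ℕ} (hm : m ≤ p) :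
    diagonalSum (fun i j : ZMod p => w i.val j.val) m =
      ∑ k ∈ Finset.range (p - m), w (m + k) k + ∑ k ∈ Finset.range m, w k (p - m + k) := by
  have hval (j : ZMod p) : ((m : ZMod p) + j).val = (m + j.val) % p := by
    rw [ZMod.val_add, ZMod.val_natCast, Nat.mod_add_mod]
  have hsum (f : ℕ → E) : ∑ j : ZMod p, f j.val = ∑ k ∈ Finset.range p, f k := by
    obtain ⟨n, rfl⟩ := Nat.exists_eq_succ_of_ne_zero (NeZero.ne p)
    exact Fin.sum_univ_eq_sum_range f (n + 1)
  have hsplit (f : ℕ → E) : ∑ k ∈ Finset.range p, f k =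
      ∑ k ∈ Finset.range (p - m), f k + ∑ k ∈ Finset.range m, f (p - m + k) := by
    rw [← Finset.sum_range_add, Nat.sub_add_cancel hm]
  simp only [diagonalSum, hval]
  rw [hsum fun k => w ((m + k) % p) k, hsplit]
  refine congrArg₂ (· + ·) (Finset.sum_congr rfl fun k hk => ?_)
    (Finset.sum_congr rfl fun k hk => ?_)
  · rw [Nat.mod_eq_of_lt (by have := Finset.mem_range.mp hk; lia)]
  · rw [show m + (p - m + k) = k + p by lia, Nat.add_mod_right,
      Nat.mod_eq_of_lt ((Finset.mem_range.mp hk).trans_le hm)]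

end CyclicShift

section QTranslation

variable {K B : Type*} [Field K] [Semiring B] [Algebra K B]

/-- `P` is an infinitesimal translation along `a` of the quantum plane `ba = u²ab`, `a^p = 0`, at a
primitive `p`-th root of unity `u`: it is a twisted derivation with `P a = s` and `P b = 0`.
The element `g` stands for the exponential function of the classical coordinates, on which `P` acts
as it would on a divided power `(αa)^p/[p]!`; this fixes the normalization of `α`. -/
structure IsQTranslation (p : ℕ) (u s α : K) (a b g : B) (σ : B ≃ₐ[K] B) (P : B →ₗ[K] B) :
    Prop where
  twisted : IsTwistedDerivation σ P
  primitive : IsPrimitiveRoot u p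
  qcomm : b * a = u ^ 2 • (a * b)
  pow_eq_zero : a ^ p = 0
  scale_a : σ a = u • a
  scale_b : σ b = u⁻¹ • b
  scale_g : σ g = g
  map_a : P a = s • 1
  map_b : P b = 0
  map_g : P g = (s * α ^ p / qFactorial u (p - 1)) • (a ^ (p - 1) * g)

/-- The family `(αa)^i/[i]! · (βb)^j/[j]! · g` of Weyl-ordered divided powers, made doubly periodic
by indexing with the representatives `0 ≤ i, j < p` of classes modulo `p`. -/
def qWave (p : ℕ) (u α β : K) (a b g : B) (i j : ZMod p) : B :=
  qMonomial u α β a b i.val j.val * g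

namespace IsQTranslation

variable {p : ℕ} {u s t α β : K} {a b g : B} {σ : B ≃ₐ[K] B} {P M : B →ₗ[K] B}

theorem scale_qWave (h : IsQTranslation p u s α a b g σ P) (i j : ZMod p) :
    σ (qWave p u α β a b g i j) = (u ^ i.val * u⁻¹ ^ j.val) • qWave p u α β a b g i j := by
  simp only [qWave, qMonomial, smul_mul_assoc, map_smul, map_mul, map_pow, h.scale_a, h.scale_b,
    h.scale_g, smul_pow, mul_smul_comm, smul_smul]
  congr 1
  ring

variable [NeZero p]

theorem root_ne_zero (h : IsQTranslation p u s α a b g σ P) : u ≠ 0 :=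
  h.primitive.ne_zero (NeZero.ne p)

theorem map_pow_mul (h : IsQTranslation p u s α a b g σ P) (j : ℕ) :
    P (b ^ j * g) =
      (u ^ ((p - 1) * j) * (s * α ^ p / qFactorial u (p - 1))) • (a ^ (p - 1) * b ^ j * g) := by
  have hb : σ.symm (b ^ j) = u ^ j • b ^ j := by
    simpa using symm_pow_of_smul (inv_ne_zero h.root_ne_zero) h.scale_b j
  have hroot : u ^ j * u ^ ((p - 1) * j) = 1 := by
    rw [← pow_add, ← one_add_mul, Nat.add_sub_cancel' NeZero.one_le, pow_mul,
      h.primitive.pow_eq_one, one_pow]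
  rw [h.twisted, h.twisted.map_pow_of_eq_zero h.map_b, zero_mul, zero_add, hb, h.map_g,
    smul_mul_smul_comm, ← mul_assoc, pow_mul_pow_of_qcomm h.qcomm, smul_mul_assoc, smul_smul]
  congr 1
  rw [two_mul, pow_add]
  linear_combination s * α ^ p / qFactorial u (p - 1) * u ^ ((p - 1) * j) * hroot

theorem map_qMonomial_zero_mul (h : IsQTranslation p u s α a b g σ P) (j : ℕ) :
    P (qMonomial u α β a b 0 j * g) = (s * α) • (qMonomial u α β a b (p - 1) j * g) := by
  have hα : α ^ p = α * α ^ (p - 1) := by rw [← pow_succ', Nat.sub_add_cancel NeZero.one_le]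
  simp only [qMonomial, pow_zero, one_mul, zero_mul, qFactorial_zero, mul_one, smul_mul_assoc,
    map_smul, h.map_pow_mul, smul_smul, hα]
  congr 1
  ring

/-- Nilpotency `a^p = 0` kills the term containing `P g`. -/
theorem map_pow_succ_mul (h : IsQTranslation p u s α a b g σ P) (hu : u - u⁻¹ ≠ 0) (i j : ℕ) :
    P (a ^ (i + 1) * b ^ j * g) = (s * qNumber u (i + 1) * u⁻¹ ^ j) • (a ^ i * b ^ j * g) := by
  have hzero : a ^ (i + 1) * (a ^ (p - 1) * b ^ j * g) = 0 := by
    rw [mul_assoc (a ^ (p - 1)), ← mul_assoc, ← pow_add,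
      show i + 1 + (p - 1) = p + i by have := NeZero.one_le (n := p); lia, pow_add,
      h.pow_eq_zero, zero_mul, zero_mul]
  rw [mul_assoc, h.twisted, h.map_pow_mul, symm_pow_of_smul h.root_ne_zero h.scale_a,
    smul_mul_smul_comm, hzero, smul_zero, add_zero,
    h.twisted.map_pow_succ hu h.scale_a h.map_a, map_mul, map_pow, h.scale_b, h.scale_g, smul_pow,
    smul_mul_assoc (u⁻¹ ^ j), smul_mul_smul_comm, mul_assoc (a ^ i)]

theorem map_qMonomial_succ_mul (h : IsQTranslation p u s α a b g σ P) (hp : Odd p) {i : ℕ}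
    (hi : i + 1 < p) (j : ℕ) :
    P (qMonomial u α β a b (i + 1) j * g) = (s * α) • (qMonomial u α β a b i j * g) := by
  have hu : u - u⁻¹ ≠ 0 := by
    simpa using pow_sub_inv_pow_ne_zero h.primitive hp one_pos (by lia)
  have hi0 : qNumber u (i + 1) ≠ 0 := qNumber_ne_zero h.primitive hp i.succ_pos hi
  have hu0 := h.root_ne_zero
  simp only [qMonomial, smul_mul_assoc, map_smul, h.map_pow_succ_mul hu, smul_smul,
    qFactorial_succ, inv_pow]
  congr 1
  field_simp
  ring

theorem map_qWave (h : IsQTranslation p u s α a b g σ P) (hp : Odd p) (i j : ZMod p) :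
    P (qWave p u α β a b g i j) = (s * α) • qWave p u α β a b g (i - 1) j := by
  obtain ⟨k, hk⟩ : ∃ k, k = i.val := ⟨_, rfl⟩
  have hlt : k < p := hk ▸ i.val_lt
  have hi : i = k := by rw [hk, ZMod.natCast_zmod_val]
  simp only [qWave, ← hk]
  cases k with
  | zero =>
    have hpred : (i - 1).val = p - 1 := by
      obtain ⟨n, rfl⟩ := Nat.exists_eq_succ_of_ne_zero (NeZero.ne p)
      simp [hi, ZMod.val_neg_one]
    rw [hpred, h.map_qMonomial_zero_mul]
  | succ k =>
    have hpred : (i - 1).val = k := by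
      rw [hi, Nat.cast_succ, add_sub_cancel_right, ZMod.val_natCast_of_lt (by lia)]
    rw [hpred, h.map_qMonomial_succ_mul hp hlt]

theorem scale_qWave_diagonal (h : IsQTranslation p u s α a b g σ P) (m : ℕ) (j : ZMod p) :
    σ (qWave p u α β a b g (m + j) j) = u ^ m • qWave p u α β a b g (m + j) j := by
  have hval : u ^ (m + j : ZMod p).val = u ^ m * u ^ j.val := by
    rw [ZMod.val_add, ZMod.val_natCast, Nat.mod_add_mod,
      ← pow_eq_pow_mod _ h.primitive.pow_eq_one, pow_add]
  rw [h.scale_qWave, hval, inv_pow,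
    mul_inv_cancel_right₀ (pow_ne_zero _ h.root_ne_zero)]

theorem qWave_swap (h : IsQTranslation p u s α a b g σ P) (i j : ZMod p) :
    qWave p u⁻¹ β α b a g j i = qWave p u α β a b g i j := by
  rw [qWave, qWave, qMonomial_swap h.qcomm h.root_ne_zero]

theorem diagonalSum_qWave_joint_eigenvector (hP : IsQTranslation p u s α a b g σ P)
    (hM : IsQTranslation p u⁻¹ t β b a g σ M) (hp : Odd p) (m : ℕ) :
    let D := diagonalSum (qWave p u α β a b g) m
    σ D = u ^ m • D ∧ (P ^ p) D = (s * α) ^ p • D ∧ (M ^ p) D = (t * β) ^ p • D ∧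
      M (P D) = (s * α * (t * β)) • D := by
  have hPshift := hP.map_qWave (β := β) hp
  have hMshift (i j : ZMod p) :
      M (qWave p u α β a b g i j) = (t * β) • qWave p u α β a b g i (j - 1) := by
    simpa only [hP.qWave_swap] using hM.map_qWave (β := α) hp j i
  exact ⟨map_diagonalSum_of_eigen (L := σ.toLinearMap) fun j => hP.scale_qWave_diagonal m j,
    map_diagonalSum_of_eigen fun j => pow_period_apply_of_shift (fun i => hPshift i j) _,
    map_diagonalSum_of_eigen fun j => pow_period_apply_of_shift (hMshift _) j,
    map_map_diagonalSum_of_shift hPshift hMshift⟩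

end IsQTranslation

end QTranslation

section RootOfUnity

theorem q_isPrimitiveRoot {p : ℕ} (hp : p ≠ 0) : IsPrimitiveRoot (q p) p :=
  Complex.isPrimitiveRoot_exp p hp

theorem qh_pow {p : ℕ} (hp : p ≠ 0) : qh p ^ p = -1 := by
  have hp' : (p : ℂ) ≠ 0 := Nat.cast_ne_zero.mpr hp
  rw [qh, ← Complex.exp_nat_mul, mul_div_cancel₀ _ hp', Complex.exp_pi_mul_I]

theorem neg_I_mul_inv_mul_pow {p : ℕ} (hp : Odd p) {h : ℂ} (hh : h ^ p = -1) (x : ℂ) :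
    (-Complex.I * h⁻¹ * x) ^ p = (-1) ^ ((p + 1) / 2) * (Complex.I * -x ^ p) := by
  have hI : (-Complex.I) ^ p = (-1) ^ ((p + 1) / 2) * Complex.I := by
    obtain ⟨r, rfl⟩ := hp
    rw [pow_succ, pow_mul, neg_sq, Complex.I_sq, show (2 * r + 1 + 1) / 2 = r + 1 by lia]
    ring
  rw [mul_pow, mul_pow, inv_pow, hh, hI]
  ring

theorem I_mul_mul_neg_I_mul_inv_mul {h : ℂ} (hh : h ≠ 0) (x : ℂ) :
    Complex.I * h * (-Complex.I * h⁻¹ * x) = x := by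
  linear_combination (-x * h * h⁻¹) * Complex.I_sq + x * mul_inv_cancel₀ hh

theorem isQTranslation_tmul {B C : Type*} [Semiring B] [Algebra ℂ B] [Semiring C] [Algebra ℂ C]
    {p : ℕ} (hp : Odd p) {u h x : ℂ} (hu : IsPrimitiveRoot u p) (hh : h ^ p = -1) {a b : B}
    (hba : b * a = u ^ 2 • (a * b)) (ha : a ^ p = 0) {f f' : C}
    (hf : f' = (Complex.I * -x ^ p) • f) {σ : B ⊗[ℂ] C ≃ₐ[ℂ] B ⊗[ℂ] C}
    {P : B ⊗[ℂ] C →ₗ[ℂ] B ⊗[ℂ] C} (hP : IsTwistedDerivation σ P)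
    (hσa : σ (a ⊗ₜ[ℂ] (1 : C)) = u • (a ⊗ₜ[ℂ] (1 : C)))
    (hσb : σ (b ⊗ₜ[ℂ] (1 : C)) = u⁻¹ • (b ⊗ₜ[ℂ] (1 : C)))
    (hσf : σ ((1 : B) ⊗ₜ[ℂ] f) = (1 : B) ⊗ₜ[ℂ] f) (hPa : P (a ⊗ₜ[ℂ] (1 : C)) = (Complex.I * h) • 1)
    (hPb : P (b ⊗ₜ[ℂ] (1 : C)) = 0)
    (hPf : P ((1 : B) ⊗ₜ[ℂ] f) =
      (Complex.I * h * ((-1) ^ ((p + 1) / 2) / qFactorial u (p - 1))) • ((a ^ (p - 1)) ⊗ₜ[ℂ] f')) :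
    IsQTranslation p u (Complex.I * h) (-Complex.I * h⁻¹ * x) (a ⊗ₜ[ℂ] (1 : C)) (b ⊗ₜ[ℂ] (1 : C))
      ((1 : B) ⊗ₜ[ℂ] f) σ P where
  twisted := hP
  primitive := hu
  qcomm := by simp [hba, TensorProduct.smul_tmul']
  pow_eq_zero := by rw [Algebra.TensorProduct.tmul_pow, ha, TensorProduct.zero_tmul]
  scale_a := hσa
  scale_b := hσb
  scale_g := hσf
  map_a := hPa
  map_b := hPb
  map_g := by
    rw [hPf, hf, TensorProduct.tmul_smul, smul_smul, neg_I_mul_inv_mul_pow hp hh,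
      Algebra.TensorProduct.tmul_pow, Algebra.TensorProduct.tmul_mul_tmul, one_pow, one_mul,
      mul_one]
    congr 1
    ring

end RootOfUnity

section Exponential

theorem fderiv_expAB (α β : ℂ) (z v : ℝ × ℝ) :
    fderiv ℝ (expAB α β : ℝ × ℝ → ℂ) z v =
      Complex.I * (α * v.1 + β * v.2) * (expAB α β : ℝ × ℝ → ℂ) z := by
  let ℓ : ℝ × ℝ →L[ℝ] ℂ :=
    Complex.I • (α • Complex.ofRealCLM.comp (ContinuousLinearMap.fst ℝ ℝ ℝ) +
      β • Complex.ofRealCLM.comp (ContinuousLinearMap.snd ℝ ℝ ℝ))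
  have hderiv : HasFDerivAt (expAB α β : ℝ × ℝ → ℂ) ((expAB α β : ℝ × ℝ → ℂ) z • ℓ) z :=
    ℓ.hasFDerivAt.cexp
  rw [hderiv.fderiv, mul_comm]
  simp [ℓ, mul_add]

theorem dPlus_expAB (α β : ℂ) : dPlus (expAB α β) = (Complex.I * α) • expAB α β :=
  Subtype.ext <| funext fun z => (fderiv_expAB α β z (1, 0)).trans (by simp)

theorem dMinus_expAB (α β : ℂ) : dMinus (expAB α β) = (Complex.I * β) • expAB α β :=
  Subtype.ext <| funext fun z => (fderiv_expAB α β z (0, 1)).trans (by simp)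

end Exponential

section QuantumPlane

theorem ηm_mul_ηp (p : ℕ) : ηm p * ηp p = q p ^ 2 • (ηp p * ηm p) := by
  simpa only [ηp, ηm, map_mul, map_smul] using RingQuot.mkAlgHom_rel ℂ (ERel.commEta (p := p))

theorem ηp_pow (p : ℕ) : ηp p ^ p = 0 := by
  simpa only [ηp, map_pow, map_zero] using RingQuot.mkAlgHom_rel ℂ (ERel.epPow (p := p))

theorem ηm_pow (p : ℕ) : ηm p ^ p = 0 := by
  simpa only [ηm, map_pow, map_zero] using RingQuot.mkAlgHom_rel ℂ (ERel.emPow (p := p))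

theorem pow_mul_Jq {α β l : ℂ} (h : α * β = -l) (p m : ℕ) :
    (α • ηp p) ^ m * Jq p l m =
      ∑ k ∈ Finset.range (p - m), qMonomial (q p) α β (ηp p) (ηm p) (m + k) k := by
  rw [Jq, Finset.mul_sum]
  refine Finset.sum_congr rfl fun k _ => ?_
  have hpow : (-1) ^ k * l ^ k = α ^ k * β ^ k := by rw [← mul_pow, ← mul_pow, h, neg_one_mul]
  rw [xi, smul_mul_pow_of_qcomm (ηm_mul_ηp p), smul_pow, smul_smul, smul_mul_smul_comm,
    ← mul_assoc (ηp p ^ m), ← pow_add (ηp p), qMonomial, qFactorial_q, qFactorial_q, add_comm k m]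
  congr 1
  rw [add_mul, pow_add, pow_add]
  linear_combination q p ^ (m * k) * q p ^ (k * k) * α ^ m / (qfact p k * qfact p (m + k)) * hpow

theorem Jq_mul_pow {α β l : ℂ} (h : α * β = -l) (p m : ℕ) :
    Jq p l m * (β • ηm p) ^ m =
      ∑ k ∈ Finset.range (p - m), qMonomial (q p) α β (ηp p) (ηm p) k (m + k) := by
  rw [Jq, Finset.sum_mul]
  refine Finset.sum_congr rfl fun k _ => ?_
  have hpow : (-1) ^ k * l ^ k = α ^ k * β ^ k := by rw [← mul_pow, ← mul_pow, h, neg_one_mul]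
  rw [xi, smul_mul_pow_of_qcomm (ηm_mul_ηp p), smul_pow, smul_smul, smul_mul_smul_comm,
    mul_assoc (ηp p ^ k), ← pow_add (ηm p), qMonomial, qFactorial_q, qFactorial_q, add_comm k m]
  congr 1
  rw [mul_add, mul_comm k m, pow_add, pow_add]
  linear_combination q p ^ (m * k) * q p ^ (k * k) * β ^ m / (qfact p k * qfact p (m + k)) * hpow

theorem dm0_eq_diagonalSum (p : ℕ) [NeZero p] (x y : ℂ) {m : ℕ} (hm : m ≤ p) :
    dm0 p x y m = diagonalSum (fun i j : ZMod p => qMonomial (q p) (-Complex.I * (qh p)⁻¹ * x)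
      (-Complex.I * qh p * y) (ηp p) (ηm p) i.val j.val) m := by
  have hαβ : (-Complex.I * (qh p)⁻¹ * x) * (-Complex.I * qh p * y) = -(x * y) := by
    have hqh : (qh p)⁻¹ * qh p = 1 := inv_mul_cancel₀ (Complex.exp_ne_zero _)
    linear_combination (x * y * Complex.I ^ 2) * hqh + x * y * Complex.I_sq
  rw [diagonalSum_val (qMonomial (q p) _ _ (ηp p) (ηm p)) hm, dm0, add_comm, pow_mul_Jq hαβ,
    Jq_mul_pow hαβ, Nat.sub_sub_self hm]

theorem dm0_tmul_eq_diagonalSum (p : ℕ) [NeZero p] (x y : ℂ) {m : ℕ} (hm : m ≤ p) (f : Cinf) :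
    dm0 p x y m ⊗ₜ[ℂ] f = diagonalSum (qWave p (q p) (-Complex.I * (qh p)⁻¹ * x)
      (-Complex.I * qh p * y) (ηp p ⊗ₜ[ℂ] (1 : Cinf)) (ηm p ⊗ₜ[ℂ] (1 : Cinf)) (1 ⊗ₜ[ℂ] f)) m := by
  have hincl (X : A p) : X ⊗ₜ[ℂ] f =
      Algebra.TensorProduct.includeLeft (R := ℂ) (S := ℂ) X * ((1 : A p) ⊗ₜ[ℂ] f) := by
    simp
  rw [hincl, dm0_eq_diagonalSum p x y hm]
  simp only [diagonalSum, qWave, map_sum, map_qMonomial, Finset.sum_mul]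
  rfl

end QuantumPlane

/-- The matrix elements `D_m = d_{m0}(λ)⊗g_λ` are joint eigenvectors of the complete set
of commuting observables `R_κ`, `R₊^p`, `R₋^p` and the Casimir `R₋∘R₊`. -/
theorem statement13 (p : ℕ) (hp : Odd p) (hp3 : 3 ≤ p)
    (RK : AC p ≃ₐ[ℂ] AC p)
    (hK1 : RK (ηp p ⊗ₜ[ℂ] (1 : ↥Cinf)) = q p • (ηp p ⊗ₜ[ℂ] (1 : ↥Cinf)))
    (hK2 : RK (ηm p ⊗ₜ[ℂ] (1 : ↥Cinf)) = (q p)⁻¹ • (ηm p ⊗ₜ[ℂ] (1 : ↥Cinf)))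
    (hK3 : RK (dl p ⊗ₜ[ℂ] (1 : ↥Cinf)) = q p • (dl p ⊗ₜ[ℂ] (1 : ↥Cinf)))
    (hK4 : ∀ f : ↥Cinf, RK ((1 : A p) ⊗ₜ[ℂ] f) = (1 : A p) ⊗ₜ[ℂ] f)
    (Rp Rm : AC p →ₗ[ℂ] AC p)
    (hp1 : Rp (ηp p ⊗ₜ[ℂ] (1 : ↥Cinf)) = (Complex.I * qh p) • (1 : AC p))
    (hp2 : Rp (ηm p ⊗ₜ[ℂ] (1 : ↥Cinf)) = 0)
    (hp3' : Rp (dl p ⊗ₜ[ℂ] (1 : ↥Cinf)) = 0)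
    (hp4 : ∀ f : ↥Cinf, Rp ((1 : A p) ⊗ₜ[ℂ] f) =
      (Complex.I * qh p * ((-1 : ℂ) ^ ((p + 1) / 2) / qfact p (p - 1))) •
        ((ηp p ^ (p - 1)) ⊗ₜ[ℂ] dPlus f))
    (hp5 : ∀ X Y : AC p, Rp (X * Y) = Rp X * RK Y + RK.symm X * Rp Y)
    (hm1 : Rm (ηm p ⊗ₜ[ℂ] (1 : ↥Cinf)) = (Complex.I * (qh p)⁻¹) • (1 : AC p))
    (hm2 : Rm (ηp p ⊗ₜ[ℂ] (1 : ↥Cinf)) = 0)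
    (hm3 : Rm (dl p ⊗ₜ[ℂ] (1 : ↥Cinf)) = 0)
    (hm4 : ∀ f : ↥Cinf, Rm ((1 : A p) ⊗ₜ[ℂ] f) =
      (Complex.I * (qh p)⁻¹ * ((-1 : ℂ) ^ ((p + 1) / 2) / qfact p (p - 1))) •
        ((ηm p ^ (p - 1)) ⊗ₜ[ℂ] dMinus f))
    (hm5 : ∀ X Y : AC p, Rm (X * Y) = Rm X * RK Y + RK.symm X * Rm Y)
    (lp lm : ℂ) :
    ∀ m : ℕ, m ≤ p - 1 →
      RK (dm0 p lp lm m ⊗ₜ[ℂ] expAB (-(lp ^ p)) (-(lm ^ p))) =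
        q p ^ m • (dm0 p lp lm m ⊗ₜ[ℂ] expAB (-(lp ^ p)) (-(lm ^ p))) ∧
      (Rp ^ p) (dm0 p lp lm m ⊗ₜ[ℂ] expAB (-(lp ^ p)) (-(lm ^ p))) =
        lp ^ p • (dm0 p lp lm m ⊗ₜ[ℂ] expAB (-(lp ^ p)) (-(lm ^ p))) ∧
      (Rm ^ p) (dm0 p lp lm m ⊗ₜ[ℂ] expAB (-(lp ^ p)) (-(lm ^ p))) =
        lm ^ p • (dm0 p lp lm m ⊗ₜ[ℂ] expAB (-(lp ^ p)) (-(lm ^ p))) ∧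
      Rm (Rp (dm0 p lp lm m ⊗ₜ[ℂ] expAB (-(lp ^ p)) (-(lm ^ p)))) =
        (lp * lm) • (dm0 p lp lm m ⊗ₜ[ℂ] expAB (-(lp ^ p)) (-(lm ^ p))) := by
  have : NeZero p := ⟨by lia⟩
  have hq := q_isPrimitiveRoot (NeZero.ne p)
  have hqh := qh_pow (NeZero.ne p)
  have hqh0 : qh p ≠ 0 := Complex.exp_ne_zero _
  have hP := isQTranslation_tmul hp hq hqh (ηm_mul_ηp p) (ηp_pow p)
    (dPlus_expAB (-(lp ^ p)) (-(lm ^ p))) hp5 hK1 hK2 (hK4 _) hp1 hp2 (hp4 _)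
  have hM := isQTranslation_tmul hp hq.inv (by rw [inv_pow, hqh, inv_neg_one])
    (qcomm_symm (ηm_mul_ηp p) hP.root_ne_zero) (ηm_pow p)
    (dMinus_expAB (-(lp ^ p)) (-(lm ^ p))) hm5 hK2 (by rwa [inv_inv]) (hK4 _) hm1 hm2
    (by rw [qFactorial_inv]; exact hm4 _)
  intro m hm
  have hD := hP.diagonalSum_qWave_joint_eigenvector hM hp m
  rw [I_mul_mul_neg_I_mul_inv_mul hqh0, I_mul_mul_neg_I_mul_inv_mul (inv_ne_zero hqh0),
    inv_inv] at hD
  rwa [dm0_tmul_eq_diagonalSum p lp lm (by lia)]
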